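/- arXiv:1205.5424 — 3 statements merged into one kernel-verified Lean document; each statement's English description precedes it below -/
import Mathlib

section
/- Let M and M' be matroids on the same finite ground set E, with rank functions r and r'. Then the following are equivalent: (iii) there is no circuit C of M and cocircuit D of M' with |C ∩ D| = 1; (iv) for all Y ⊆ X ⊆ E, one has r'(X) - r'(Y) ≤ r(X) - r(Y) (equivalently, r(Y) - r'(Y) ≤ r(X) - r'(X)). (These are two of the equivalent defining conditions for the identity map to be a matroid strong map, i.e. for the pair M → M' to be a matroid perspective.) -/
/-! Both conditions say that `M.closure X ⊆ M'.closure X` for every `X`. For the circuit condition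
this is because a point `e ∉ X` lies in the closure of `X` iff some circuit in `insert e X` contains
`e`, while `e` lies outside the closure iff some cocircuit contains `e` and avoids `X`. For the rank
condition, extend an `M`-basis `I` of `Y` to an `M`-basis `J` of `X`: as `J` spans `X` in `M'` too,
the rank of `M'` grows from `Y` to `X` by at most `|J \ I|`, the growth of the rank of `M`.
Conversely, adding to `Y` a point of its `M`-closure does not raise the rank in `M`, hence not in
`M'` either. -/

open Set

/-- The rank of a set in a matroid: the largest cardinality of an independent subset. -/
noncomputable def Matroid.rk' {α : Type*} (M : Matroid α) (X : Set α) : ℕ :=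
  sSup {n | ∃ I, M.Indep I ∧ I ⊆ X ∧ I.ncard = n}

/-- A circuit of a matroid is a minimal dependent set. -/
def Matroid.IsCircuit' {α : Type*} (M : Matroid α) (C : Set α) : Prop :=
  Minimal M.Dep C

/-- A cocircuit of a matroid is a circuit of the dual matroid. -/
def Matroid.IsCocircuit' {α : Type*} (M : Matroid α) (D : Set α) : Prop :=
  M✶.IsCircuit' D

section Closure

variable {α : Type*} {M M' : Matroid α} {X Y : Set α} {e : α}

theorem inter_nonempty_of_mem_closure_of_mem_isCocircuit {K : Set α} (he : e ∈ M.closure X)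
    (hK : M.IsCocircuit K) (heK : e ∈ K) : (K ∩ X).Nonempty := by
  by_contra hKX
  rw [not_nonempty_iff_eq_empty, ← disjoint_iff_inter_eq_empty, disjoint_left] at hKX
  obtain ⟨C, hCX, hC, heC⟩ := M.exists_isCircuit_of_mem_closure he (hKX heK)
  refine hC.inter_isCocircuit_ne_singleton hK (e := e) <|
    eq_singleton_iff_unique_mem.2 ⟨⟨heC, heK⟩, fun x ⟨hxC, hxK⟩ ↦ ?_⟩
  exact (hCX hxC).resolve_right (hKX hxK)

theorem exists_isCocircuit_disjoint_of_notMem_closure (heE : e ∈ M.E) (he : e ∉ M.closure X) :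
    ∃ K, M.IsCocircuit K ∧ e ∈ K ∧ Disjoint K X := by
  obtain ⟨I, hI⟩ := M.exists_isBasis' X
  rw [← hI.closure_eq_closure] at he
  have heI : e ∉ I := fun h ↦ he (M.mem_closure_of_mem h hI.indep.subset_ground)
  have hIe : M.Indep (insert e I) := (hI.indep.insert_indep_iff_of_notMem heI).2 ⟨heE, he⟩
  obtain ⟨K, hK, hKI⟩ := hIe.exists_isCocircuit_inter_eq_mem (mem_insert e I)
  have heK : e ∈ K := (hKI.superset rfl).1
  refine ⟨K, hK, heK, disjoint_left.2 fun x hxK hxX ↦ ?_⟩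
  have hxI : x ∈ M.closure I :=
    hI.closure_eq_closure ▸ M.mem_closure_of_mem' hxX (hK.subset_ground hxK)
  obtain ⟨y, hyK, hyI⟩ := inter_nonempty_of_mem_closure_of_mem_isCocircuit hxI hK hxK
  have hye : y = e := hKI.subset ⟨hyK, mem_insert_of_mem e hyI⟩
  exact heI (hye ▸ hyI)

theorem not_exists_ncard_isCircuit_inter_isCocircuit_eq_one_iff (hE : M.E ⊆ M'.E) :
    (¬ ∃ C D, M.IsCircuit C ∧ M'.IsCocircuit D ∧ (C ∩ D).ncard = 1) ↔
      ∀ X, M.closure X ⊆ M'.closure X := by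
  constructor
  · intro hCD X e he
    by_contra he'
    have heE : e ∈ M.E := M.closure_subset_ground X he
    obtain ⟨D, hD, heD, hDX⟩ := exists_isCocircuit_disjoint_of_notMem_closure (hE heE) he'
    have heX : e ∉ X := disjoint_left.1 hDX heD
    obtain ⟨C, hCX, hC, heC⟩ := M.exists_isCircuit_of_mem_closure he heX
    refine hCD ⟨C, D, hC, hD, ncard_eq_one.2 ⟨e, ?_⟩⟩
    exact eq_singleton_iff_unique_mem.2 ⟨⟨heC, heD⟩, fun x ⟨hxC, hxD⟩ ↦
      (hCX hxC).resolve_right (disjoint_left.1 hDX hxD)⟩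
  · rintro hcl ⟨C, D, hC, hD, hCD⟩
    obtain ⟨e, hCDe⟩ := ncard_eq_one.1 hCD
    obtain ⟨heC, heD⟩ : e ∈ C ∩ D := hCDe.superset rfl
    have he : e ∈ M'.closure (C \ {e}) := hcl _ (hC.mem_closure_sdiff_singleton_of_mem heC)
    obtain ⟨x, hxD, hxC, hxe⟩ := inter_nonempty_of_mem_closure_of_mem_isCocircuit he hD heD
    exact hxe (hCDe.subset ⟨hxC, hxD⟩)

theorem eRk_add_eRk_le_of_closure_subset_closure (hcl : ∀ X, M.closure X ⊆ M'.closure X)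
    (hYX : Y ⊆ X) (hX : X ⊆ M.E) : M'.eRk X + M.eRk Y ≤ M.eRk X + M'.eRk Y := by
  obtain ⟨I, J, hI, hJ, hIJ⟩ := M.exists_isBasis_subset_isBasis hYX
  have hXJ : M'.eRk X ≤ M'.eRk J :=
    M'.eRk_closure_eq J ▸ M'.eRk_mono (hJ.subset_closure.trans (hcl J))
  have hJY : M'.eRk J ≤ M'.eRk Y + (J \ I).encard :=
    calc M'.eRk J
      _ = M'.eRk (I ∪ J \ I) := by rw [union_sdiff_cancel hIJ]
      _ ≤ M'.eRk I + (J \ I).encard := M'.eRk_union_le_eRk_add_encard I (J \ I)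
      _ ≤ M'.eRk Y + (J \ I).encard := by gcongr; exact M'.eRk_mono hI.subset
  calc M'.eRk X + M.eRk Y
    _ ≤ M'.eRk Y + (J \ I).encard + M.eRk Y := by gcongr; exact hXJ.trans hJY
    _ = (J \ I).encard + I.encard + M'.eRk Y := by rw [hI.eRk_eq_encard]; ring
    _ = M.eRk X + M'.eRk Y := by rw [encard_sdiff_add_encard_of_subset hIJ, hJ.eRk_eq_encard]

theorem closure_subset_closure_of_eRk_add_eRk_le [M.Finitary] (hE : M.E ⊆ M'.E)
    (hrk : ∀ ⦃Y X⦄, Y ⊆ X → X ⊆ M.E → M'.eRk X + M.eRk Y ≤ M.eRk X + M'.eRk Y) (X : Set α) :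
    M.closure X ⊆ M'.closure X := by
  intro e he
  have heE : e ∈ M.E := M.closure_subset_ground X he
  obtain ⟨I, hIX, hIfin, hI, heI⟩ := M.exists_mem_finite_closure_of_mem_closure he
  have hrk_insert : M.eRk (insert e I) = M.eRk I := by
    rw [← M.eRk_insert_closure_eq, insert_eq_of_mem heI, M.eRk_closure_eq]
  have hrk'_insert : M'.eRk (insert e I) ≤ M'.eRk I := by
    have h := hrk (subset_insert e I) (insert_subset heE hI.subset_ground)
    rw [hrk_insert, add_comm] at h
    exact (ENat.add_le_add_iff_left (M.isRkFinite_of_finite hIfin).eRk_lt_top.ne).1 h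
  have hcl : M'.closure I = M'.closure (insert e I) :=
    (M'.isRkFinite_of_finite hIfin).closure_eq_closure_of_subset_of_eRk_ge_eRk
      (subset_insert e I) hrk'_insert
  refine M'.closure_subset_closure hIX ?_
  exact hcl ▸ M'.mem_closure_of_mem' (mem_insert e I) (hE heE)

/-- Stated with sums, since truncated subtraction in `ℕ∞` has `⊤ - ⊤ = 0`. -/
theorem statement0_general [M.Finitary] (hE : M.E ⊆ M'.E) :
    (¬ ∃ C D, M.IsCircuit C ∧ M'.IsCocircuit D ∧ (C ∩ D).ncard = 1) ↔
      ∀ ⦃Y X⦄, Y ⊆ X → X ⊆ M.E → M'.eRk X + M.eRk Y ≤ M.eRk X + M'.eRk Y :=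
  (not_exists_ncard_isCircuit_inter_isCocircuit_eq_one_iff hE).trans
    ⟨fun hcl _ _ ↦ eRk_add_eRk_le_of_closure_subset_closure hcl,
      closure_subset_closure_of_eRk_add_eRk_le hE⟩

end Closure

section Rank

variable {α : Type*} {M M' : Matroid α} {X Y : Set α}

theorem coe_rk'_eq_eRk (hX : M.IsRkFinite X) : (M.rk' X : ℕ∞) = M.eRk X := by
  obtain ⟨I, hI, hIfin⟩ := hX.exists_finite_isBasis'
  have hrk : M.rk' X = I.ncard := by
    refine IsGreatest.csSup_eq ⟨⟨I, hI.indep, hI.subset, rfl⟩, ?_⟩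
    rintro _ ⟨J, hJ, hJX, rfl⟩
    have hJI : J.encard ≤ I.encard := hI.encard_eq_eRk ▸ hJ.encard_le_eRk_of_subset hJX
    exact ENat.toNat_le_toNat hJI hIfin.encard_lt_top.ne
  rw [hrk, hIfin.cast_ncard_eq, hI.encard_eq_eRk]

theorem rk'_sub_rk'_le_iff [M.RankFinite] [M'.RankFinite] :
    (M'.rk' X : ℤ) - M'.rk' Y ≤ (M.rk' X : ℤ) - M.rk' Y ↔
      M'.eRk X + M.eRk Y ≤ M.eRk X + M'.eRk Y := by
  simp only [sub_le_sub_iff, ← coe_rk'_eq_eRk (Matroid.isRkFinite_set _ _)]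
  norm_cast

end Rank

/-- for matroids `M`, `M'` on the same finite ground set, the condition that no
circuit of `M` meets a cocircuit of `M'` in exactly one element is equivalent to the
rank inequality `r'(X) - r'(Y) ≤ r(X) - r(Y)` for all `Y ⊆ X ⊆ E`. -/
theorem statement0 {α : Type*} (M M' : Matroid α) (hE : M.E = M'.E) (hfin : M.E.Finite) :
    (¬ ∃ C D : Set α, M.IsCircuit' C ∧ M'.IsCocircuit' D ∧ (C ∩ D).ncard = 1) ↔
      (∀ ⦃Y X : Set α⦄, Y ⊆ X → X ⊆ M.E →
        (M'.rk' X : ℤ) - M'.rk' Y ≤ (M.rk' X : ℤ) - M.rk' Y) := by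
  have : M.Finite := ⟨hfin⟩
  have : M'.Finite := ⟨hE ▸ hfin⟩
  simp only [rk'_sub_rk'_le_iff]
  exact statement0_general hE.subset
end

section
/- (4-variable expansion of the Tutte polynomial in orientation activities, realizable case.) For every vector configuration v : Fin n → V and all real numbers x, u, y, w: t(x+u, y+w) = ∑_{A ⊆ Fin n} x^{θ*(A)} · u^{θ̄*(A)} · y^{θ(A)} · w^{θ̄(A)}. -/
open Set Submodule

/-- The reorientation of the vector configuration `v` on the subset `A`:
vectors indexed by `A` are negated. -/
def reorient {n : ℕ} {V : Type*} [AddCommGroup V] (v : Fin n → V) (A : Finset (Fin n)) :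
    Fin n → V :=
  fun i => if i ∈ A then -v i else v i

/-- `a` is orientation-active for the configuration `w`: it is the smallest element of a
positive circuit, i.e. there is a nonnegative linear dependence with positive coefficient
at `a` and zero coefficients below `a`. -/
def OActive {n : ℕ} {V : Type*} [AddCommGroup V] [Module ℝ V]
    (w : Fin n → V) (a : Fin n) : Prop :=
  ∃ c : Fin n → ℝ, (∀ i, 0 ≤ c i) ∧ (∑ i, c i • w i) = 0 ∧ 0 < c a ∧ ∀ i < a, c i = 0

/-- `a` is dually orientation-active for the configuration `w`: it is the smallest element of
a positive cocircuit, i.e. there is a linear functional, nonnegative on the configuration,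
positive at `w a` and vanishing on the vectors below `a`. -/
def ODualActive {n : ℕ} {V : Type*} [AddCommGroup V] [Module ℝ V]
    (w : Fin n → V) (a : Fin n) : Prop :=
  ∃ f : V →ₗ[ℝ] ℝ, (∀ i, 0 ≤ f (w i)) ∧ 0 < f (w a) ∧ ∀ i < a, f (w i) = 0

/-- `θ*(A)`: the number of elements outside `A` that are dually orientation-active for `v_A`. -/
noncomputable def thetaStar {n : ℕ} {V : Type*} [AddCommGroup V] [Module ℝ V]
    (v : Fin n → V) (A : Finset (Fin n)) : ℕ :=
  {a : Fin n | a ∉ A ∧ ODualActive (reorient v A) a}.ncard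

/-- `θ̄*(A)`: the number of elements of `A` that are dually orientation-active for `v_A`. -/
noncomputable def thetaStarBar {n : ℕ} {V : Type*} [AddCommGroup V] [Module ℝ V]
    (v : Fin n → V) (A : Finset (Fin n)) : ℕ :=
  {a : Fin n | a ∈ A ∧ ODualActive (reorient v A) a}.ncard

/-- `θ(A)`: the number of elements outside `A` that are orientation-active for `v_A`. -/
noncomputable def theta {n : ℕ} {V : Type*} [AddCommGroup V] [Module ℝ V]
    (v : Fin n → V) (A : Finset (Fin n)) : ℕ :=
  {a : Fin n | a ∉ A ∧ OActive (reorient v A) a}.ncard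

/-- `θ̄(A)`: the number of elements of `A` that are orientation-active for `v_A`. -/
noncomputable def thetaBar {n : ℕ} {V : Type*} [AddCommGroup V] [Module ℝ V]
    (v : Fin n → V) (A : Finset (Fin n)) : ℕ :=
  {a : Fin n | a ∈ A ∧ OActive (reorient v A) a}.ncard

/-- The rank of a set of indices: the dimension of the span of the corresponding vectors. -/
noncomputable def vrank {n : ℕ} {V : Type*} [AddCommGroup V] [Module ℝ V]
    (v : Fin n → V) (S : Set (Fin n)) : ℕ :=
  Module.finrank ℝ ↥(span ℝ (v '' S))

/-- The Tutte polynomial of the matroid realized by the configuration `v`: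
`t(x,y) = ∑_{A ⊆ Fin n} (x-1)^(r(E) - r(A)) * (y-1)^(|A| - r(A))`. -/
noncomputable def tutteV {n : ℕ} {V : Type*} [AddCommGroup V] [Module ℝ V]
    (v : Fin n → V) (x y : ℝ) : ℝ :=
  ∑ A : Finset (Fin n),
    (x - 1) ^ (vrank v Set.univ - vrank v ↑A) * (y - 1) ^ (A.card - vrank v ↑A)

/-!
Both sides satisfy the same deletion–contraction recursion on the largest element `z`. If `z` is a
loop or a coloop, then in both of its orientations the smaller elements have the activities of the
deletion. Otherwise, one orientation of `z` gives them the activities of the deletion, primal and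
dual, and the other those of the contraction. Indeed, by elimination for dependencies, at most one
orientation has more primal activities than the deletion; by elimination for covectors, at most one
has more dual activities than the contraction; and by orthogonality of dependencies and covectors,
no orientation has both. Together, the two orientations have the primal activities of the
contraction and the dual activities of the deletion, which settles the rest.
-/

theorem le_or_le_of_forall_or {α β : Type*} {P P' : α → Prop} {Q Q' : β → Prop}
    (h : ∀ a b, P a → Q b → P' a ∨ Q' b) : P ≤ P' ∨ Q ≤ Q' := by
  by_contra! hPQ
  simp only [Pi.le_def, le_Prop_eq, not_forall] at hPQ
  obtain ⟨⟨a, ha, ha'⟩, b, hb, hb'⟩ := hPQ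
  exact (h a b ha hb).elim ha' hb'

theorem exists_forall_eq_zero_of_notMem_span {K V ι : Type*} [Field K] [AddCommGroup V]
    [Module K V] {p : ι → V} {z : V} (hz : z ∉ span K (range p)) :
    ∃ f : V →ₗ[K] K, (∀ i, f (p i) = 0) ∧ f z = 1 := by
  obtain ⟨f, hfz, hf⟩ := Submodule.exists_le_ker_of_notMem hz
  exact ⟨(f z)⁻¹ • f, fun i => by simp [show f (p i) = 0 from hf (subset_span ⟨i, rfl⟩)],
    by simp [hfz]⟩

section ActiveIn

variable {R ι : Type*} [CommRing R] [LinearOrder R]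

/-- `a` is the least element of the support of some `c ≥ 0` with `(c, t) ∈ L` and `t ∈ s`. This
describes the activities below a largest element `e`, whose coordinate is `t`, in terms of the
space `L` of all dependencies. The choices `Ici 0`, `Iic 0`, `{0}` and `univ` of `s` correspond to
keeping `e`, reversing `e`, deleting `e` and contracting `e`; for the space of covectors, deletion
and contraction trade places. -/
def ActiveIn [LT ι] (L : Submodule R ((ι → R) × R)) (s : Set R) (a : ι) : Prop :=
  ∃ d ∈ L, 0 ≤ d.1 ∧ d.2 ∈ s ∧ 0 < d.1 a ∧ ∀ i < a, d.1 i = 0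

variable {s t : Set R}

theorem ActiveIn.mono [LT ι] {L : Submodule R ((ι → R) × R)} (hst : s ⊆ t) :
    ActiveIn L s ≤ ActiveIn L t :=
  fun _ ⟨d, hdL, hd, hs, hda⟩ => ⟨d, hdL, hd, hst hs, hda⟩

theorem activeIn_union [LT ι] {L : Submodule R ((ι → R) × R)} :
    ActiveIn L (s ∪ t) = ActiveIn L s ⊔ ActiveIn L t := by
  refine le_antisymm ?_
    (sup_le (ActiveIn.mono subset_union_left) (ActiveIn.mono subset_union_right))
  rintro a ⟨d, hdL, hd, hs | ht, hda⟩
  exacts [.inl ⟨d, hdL, hd, hs, hda⟩, .inr ⟨d, hdL, hd, ht, hda⟩]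

theorem activeIn_eq_of_forall_mem [LT ι] {L : Submodule R ((ι → R) × R)}
    (hL : ∀ d ∈ L, (d.1, 0) ∈ L) (hs : 0 ∈ s) : ActiveIn L s = ActiveIn L {0} :=
  le_antisymm (fun _ ⟨d, hdL, hd, _, hda⟩ => ⟨(d.1, 0), hL d hdL, hd, rfl, hda⟩)
    (ActiveIn.mono (singleton_subset_iff.2 hs))

theorem activeIn_eq_of_le [LT ι] {L : Submodule R ((ι → R) × R)}
    (hs : 0 ∈ s) (ht : 0 ∈ t) (hst : s ∪ t = univ) (h : ActiveIn L s ≤ ActiveIn L {0}) :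
    ActiveIn L s = ActiveIn L {0} ∧ ActiveIn L t = ActiveIn L univ := by
  refine ⟨h.antisymm (ActiveIn.mono (singleton_subset_iff.2 hs)), ?_⟩
  rw [← hst, activeIn_union, right_eq_sup]
  exact h.trans (ActiveIn.mono (singleton_subset_iff.2 ht))

variable [IsStrictOrderedRing R]

theorem ActiveIn.elimination [LinearOrder ι] {L : Submodule R ((ι → R) × R)} {a b : ι}
    (ha : ActiveIn L (Ici 0) a) (hb : ActiveIn L (Iic 0) b) :
    ActiveIn L {0} a ∨ ActiveIn L {0} b := by
  obtain ⟨⟨c, s⟩, hcL, hc, hs, hca, hc0⟩ := ha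
  obtain ⟨⟨d, t⟩, hdL, hd, ht, hdb, hd0⟩ := hb
  change 0 ≤ s at hs
  change t ≤ 0 at ht
  obtain rfl | hs := hs.eq_or_lt
  · exact .inl ⟨(c, 0), hcL, hc, rfl, hca, hc0⟩
  obtain rfl | ht := ht.eq_or_lt
  · exact .inr ⟨(d, 0), hdL, hd, rfl, hdb, hd0⟩
  have eliminant_mem : (-t • c + s • d, (0 : R)) ∈ L := by
    simpa [mul_comm s t] using L.add_mem (L.smul_mem (-t) hcL) (L.smul_mem s hdL)
  have hc' : 0 ≤ -t • c := smul_nonneg (neg_nonneg.2 ht.le) hc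
  have hd' : 0 ≤ s • d := smul_nonneg hs.le hd
  have eliminant_nonneg : 0 ≤ -t • c + s • d := add_nonneg hc' hd'
  obtain hab | hba := le_total a b
  · refine .inl ⟨_, eliminant_mem, eliminant_nonneg, rfl, ?_, fun i hi => ?_⟩
    · exact add_pos_of_pos_of_nonneg (mul_pos (neg_pos.2 ht) hca) (hd' a)
    · simp [show c i = 0 from hc0 i hi, show d i = 0 from hd0 i (hi.trans_le hab)]
  · refine .inr ⟨_, eliminant_mem, eliminant_nonneg, rfl, ?_, fun i hi => ?_⟩
    · exact add_pos_of_nonneg_of_pos (hc' b) (mul_pos hs hdb)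
    · simp [show c i = 0 from hc0 i (hi.trans_le hba), show d i = 0 from hd0 i hi]

theorem activeIn_Ici_le_or_Iic_le [LinearOrder ι] (L : Submodule R ((ι → R) × R)) :
    ActiveIn L (Ici 0) ≤ ActiveIn L {0} ∨ ActiveIn L (Iic 0) ≤ ActiveIn L {0} :=
  le_or_le_of_forall_or fun _ _ ha hb => ha.elimination hb

variable [Fintype ι]

theorem ActiveIn.orthogonality [LT ι] {L M : Submodule R ((ι → R) × R)}
    (hLM : ∀ d ∈ L, ∀ e ∈ M, d.1 ⬝ᵥ e.1 + d.2 * e.2 = 0)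
    (hst : ∀ x ∈ s, ∀ y ∈ t, 0 ≤ x * y) {a b : ι} (ha : ActiveIn L s a) (hb : ActiveIn M t b) :
    ActiveIn L {0} a ∨ ActiveIn M {0} b := by
  obtain ⟨d, hdL, hd, hds, hda⟩ := ha
  obtain ⟨e, heM, he, het, heb⟩ := hb
  have last_eq_zero : d.2 * e.2 = 0 :=
    ((add_eq_zero_iff_of_nonneg (dotProduct_nonneg_of_nonneg hd he) (hst _ hds _ het)).1
      (hLM d hdL e heM)).2
  exact (mul_eq_zero.1 last_eq_zero).imp (fun h => ⟨d, hdL, hd, h, hda⟩)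
    (fun h => ⟨e, heM, he, h, heb⟩)

theorem activeIn_le_or_le_of_orthogonal [LT ι] {L M : Submodule R ((ι → R) × R)}
    (hLM : ∀ d ∈ L, ∀ e ∈ M, d.1 ⬝ᵥ e.1 + d.2 * e.2 = 0) (hst : ∀ x ∈ s, ∀ y ∈ t, 0 ≤ x * y) :
    ActiveIn L s ≤ ActiveIn L {0} ∨ ActiveIn M t ≤ ActiveIn M {0} :=
  le_or_le_of_forall_or fun _ _ ha hb => ha.orthogonality hLM hst hb

theorem activeIn_dichotomy [LinearOrder ι] {L M : Submodule R ((ι → R) × R)}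
    (hLM : ∀ d ∈ L, ∀ e ∈ M, d.1 ⬝ᵥ e.1 + d.2 * e.2 = 0) :
    ((ActiveIn L (Ici 0) = ActiveIn L {0} ∧ ActiveIn L (Iic 0) = ActiveIn L univ) ∧
      ActiveIn M (Iic 0) = ActiveIn M {0} ∧ ActiveIn M (Ici 0) = ActiveIn M univ) ∨
    ((ActiveIn L (Iic 0) = ActiveIn L {0} ∧ ActiveIn L (Ici 0) = ActiveIn L univ) ∧
      ActiveIn M (Ici 0) = ActiveIn M {0} ∧ ActiveIn M (Iic 0) = ActiveIn M univ) := by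
  have hL := activeIn_Ici_le_or_Iic_le L
  have hM := activeIn_Ici_le_or_Iic_le M
  have h_pos := activeIn_le_or_le_of_orthogonal hLM (s := Ici 0) (t := Ici 0)
    fun _ hx _ hy => mul_nonneg hx hy
  have h_neg := activeIn_le_or_le_of_orthogonal hLM (s := Iic 0) (t := Iic 0)
    fun _ hx _ hy => mul_nonneg_of_nonpos_of_nonpos hx hy
  have of_Ici (N : Submodule R ((ι → R) × R)) :=
    activeIn_eq_of_le (L := N) self_mem_Ici self_mem_Iic Ici_union_Iic
  have of_Iic (N : Submodule R ((ι → R) × R)) :=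
    activeIn_eq_of_le (L := N) self_mem_Iic self_mem_Ici Iic_union_Ici
  have h : (ActiveIn L (Ici 0) ≤ ActiveIn L {0} ∧ ActiveIn M (Iic 0) ≤ ActiveIn M {0}) ∨
      (ActiveIn L (Iic 0) ≤ ActiveIn L {0} ∧ ActiveIn M (Ici 0) ≤ ActiveIn M {0}) := by tauto
  exact h.imp (fun h => ⟨of_Ici L h.1, of_Iic M h.2⟩) (fun h => ⟨of_Iic L h.1, of_Ici M h.2⟩)

end ActiveIn

section Extension

variable {n : ℕ} {V : Type*}

/-- The extension of the configuration `p` by `z`, which becomes its largest element. -/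
def extend (p : Fin n → V) (z : V) : Fin (n + 1) → V :=
  Fin.snoc (α := fun _ => V) p z

@[simp]
theorem extend_castSucc (p : Fin n → V) (z : V) (i : Fin n) : extend p z i.castSucc = p i :=
  Fin.snoc_castSucc _ _ _

@[simp]
theorem extend_last (p : Fin n → V) (z : V) : extend p z (Fin.last n) = z :=
  Fin.snoc_last _ _

theorem extend_image_map_castSucc (p : Fin n → V) (z : V) (A : Finset (Fin n)) :
    extend p z '' (A.map Fin.castSuccEmb) = p '' A := by
  simp only [Finset.coe_map, image_image, Fin.coe_castSuccEmb, extend_castSucc]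

variable [AddCommGroup V] [Module ℝ V]

/-- The contraction by `z` of the configuration `extend p z`. -/
def contract (p : Fin n → V) (z : V) : Fin n → V ⧸ span ℝ {z} :=
  fun i => (span ℝ {z}).mkQ (p i)

/-- The linear dependencies of `extend p z`, with the coefficient of `z` set apart. -/
def dependencies (p : Fin n → V) (z : V) : Submodule ℝ ((Fin n → ℝ) × ℝ) :=
  LinearMap.ker ((Fintype.linearCombination ℝ p).coprod (LinearMap.toSpanSingleton ℝ V z))

/-- The vectors of values of linear functionals on `extend p z`, with the value at `z` set apart. -/
def covectors (p : Fin n → V) (z : V) : Submodule ℝ ((Fin n → ℝ) × ℝ) :=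
  LinearMap.range ((LinearMap.pi fun i => Module.Dual.eval ℝ V (p i)).prod (Module.Dual.eval ℝ V z))

variable {p : Fin n → V} {z : V}

theorem mem_dependencies {d : (Fin n → ℝ) × ℝ} :
    d ∈ dependencies p z ↔ ∑ i, d.1 i • p i + d.2 • z = 0 := by
  simp [dependencies, Fintype.linearCombination_apply]

theorem mem_covectors {d : (Fin n → ℝ) × ℝ} :
    d ∈ covectors p z ↔ ∃ f : V →ₗ[ℝ] ℝ, (fun i => f (p i), f z) = d :=
  Iff.rfl

theorem dependencies_orthogonal_covectors :
    ∀ d ∈ dependencies p z, ∀ e ∈ covectors p z, d.1 ⬝ᵥ e.1 + d.2 * e.2 = 0 := by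
  rintro d hd _ ⟨f, rfl⟩
  simpa [dotProduct] using congrArg f (mem_dependencies.1 hd)

theorem oActive_extend_castSucc (p : Fin n → V) (z : V) (a : Fin n) :
    OActive (extend p z) a.castSucc ↔ ActiveIn (dependencies p z) (Ici 0) a := by
  constructor
  · rintro ⟨c, hc, hsum, hca, hc0⟩
    refine ⟨(fun i => c i.castSucc, c (Fin.last n)), mem_dependencies.2 ?_, fun i => hc _, hc _,
      hca, fun i hi => hc0 _ (Fin.castSucc_lt_castSucc_iff.2 hi)⟩
    simpa [Fin.sum_univ_castSucc] using hsum
  · rintro ⟨⟨c, t⟩, hsum, hc, ht, hca, hc0⟩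
    refine ⟨extend c t, ?_, ?_, by simpa using hca, ?_⟩
    · exact Fin.forall_fin_succ'.2 ⟨fun i => by simpa using hc i, by simpa using ht⟩
    · simpa [Fin.sum_univ_castSucc] using mem_dependencies.1 hsum
    · exact Fin.forall_fin_succ'.2 ⟨by simpa using hc0, fun h => absurd h (Fin.le_last _).not_gt⟩

theorem oActive_extend_neg_castSucc (p : Fin n → V) (z : V) (a : Fin n) :
    OActive (extend p (-z)) a.castSucc ↔ ActiveIn (dependencies p z) (Iic 0) a := by
  rw [oActive_extend_castSucc]
  constructor
  all_goals
    rintro ⟨⟨c, t⟩, hsum, hc, ht, hca⟩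
    refine ⟨(c, -t), mem_dependencies.2 ?_, hc, by simpa using ht, hca⟩
    simpa using mem_dependencies.1 hsum

theorem oActive_eq_activeIn (p : Fin n → V) (z : V) :
    OActive p = ActiveIn (dependencies p z) {0} := by
  ext a
  constructor
  · rintro ⟨c, hc, hsum, hca⟩
    exact ⟨(c, 0), mem_dependencies.2 (by simpa using hsum), hc, rfl, hca⟩
  · rintro ⟨⟨c, _⟩, hsum, hc, rfl, hca⟩
    exact ⟨c, hc, by simpa using mem_dependencies.1 hsum, hca⟩

theorem oActive_contract_eq_activeIn (p : Fin n → V) (z : V) :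
    OActive (contract p z) = ActiveIn (dependencies p z) univ := by
  have sum_contract_eq_zero (c : Fin n → ℝ) :
      ∑ i, c i • contract p z i = 0 ↔ ∃ t, (c, t) ∈ dependencies p z := by
    have : ∑ i, c i • contract p z i = (span ℝ {z}).mkQ (∑ i, c i • p i) := by
      simp only [contract, map_sum, map_smul]
    rw [this, mkQ_apply, Quotient.mk_eq_zero, mem_span_singleton, (Equiv.neg ℝ).exists_congr_left]
    simp [mem_dependencies, eq_comm, neg_eq_iff_add_eq_zero, add_comm]
  ext a
  constructor
  · rintro ⟨c, hc, hsum, hca⟩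
    obtain ⟨t, ht⟩ := (sum_contract_eq_zero c).1 hsum
    exact ⟨(c, t), ht, hc, trivial, hca⟩
  · rintro ⟨⟨c, t⟩, ht, hc, -, hca⟩
    exact ⟨c, hc, (sum_contract_eq_zero c).2 ⟨t, ht⟩, hca⟩

theorem oDualActive_extend_castSucc (p : Fin n → V) (z : V) (a : Fin n) :
    ODualActive (extend p z) a.castSucc ↔ ActiveIn (covectors p z) (Ici 0) a := by
  constructor
  · rintro ⟨f, hf, hfa, hf0⟩
    exact ⟨_, ⟨f, rfl⟩, fun i => by simpa using hf i.castSucc, by simpa using hf (Fin.last n),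
      by simpa using hfa, fun i hi => by simpa using hf0 i.castSucc (by simpa using hi)⟩
  · rintro ⟨_, ⟨f, rfl⟩, hf, hfz, hfa, hf0⟩
    refine ⟨f, ?_, by simpa using hfa, ?_⟩
    · exact Fin.forall_fin_succ'.2 ⟨fun i => by simpa using hf i, by simpa using hfz⟩
    · exact Fin.forall_fin_succ'.2 ⟨fun i hi => by simpa using hf0 i (by simpa using hi),
        fun h => absurd h (Fin.le_last _).not_gt⟩

theorem oDualActive_extend_neg_castSucc (p : Fin n → V) (z : V) (a : Fin n) :
    ODualActive (extend p (-z)) a.castSucc ↔ ActiveIn (covectors p z) (Iic 0) a := by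
  rw [oDualActive_extend_castSucc]
  constructor
  all_goals
    rintro ⟨_, ⟨f, rfl⟩, hf, hfz, hfa⟩
    exact ⟨_, ⟨f, rfl⟩, hf, by simpa using hfz, hfa⟩

theorem oDualActive_eq_activeIn (p : Fin n → V) (z : V) :
    ODualActive p = ActiveIn (covectors p z) univ := by
  ext a
  constructor
  · rintro ⟨f, hf⟩
    exact ⟨_, ⟨f, rfl⟩, hf.1, trivial, hf.2⟩
  · rintro ⟨_, ⟨f, rfl⟩, hf, -, hfa⟩
    exact ⟨f, hf, hfa⟩

theorem oDualActive_contract_eq_activeIn (p : Fin n → V) (z : V) :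
    ODualActive (contract p z) = ActiveIn (covectors p z) {0} := by
  ext a
  constructor
  · rintro ⟨f, hf, hfa⟩
    refine ⟨_, ⟨f ∘ₗ (span ℝ {z}).mkQ, rfl⟩, hf, ?_, hfa⟩
    simp [(Quotient.mk_eq_zero _).2 (mem_span_singleton_self z)]
  · rintro ⟨_, ⟨f, rfl⟩, hf, hfz, hfa⟩
    exact ⟨(span ℝ {z}).liftQ f ((span_singleton_le_iff_mem _ _).2 hfz), hf, hfa⟩

theorem oActive_extend_last (p : Fin n → V) (z : V) :
    OActive (extend p z) (Fin.last n) ↔ z = 0 := by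
  constructor
  · rintro ⟨c, -, hsum, hc_last, hc0⟩
    have hc0' (i : Fin n) : c i.castSucc = 0 := hc0 _ (Fin.castSucc_lt_last i)
    simpa [Fin.sum_univ_castSucc, hc0', hc_last.ne'] using hsum
  · rintro rfl
    refine ⟨Pi.single (Fin.last n) 1, fun i => ?_, by simp [Pi.single_apply], by simp,
      fun i hi => Pi.single_eq_of_ne hi.ne _⟩
    exact (Pi.single_nonneg.2 zero_le_one : (0 : Fin (n + 1) → ℝ) ≤ _) i

theorem oDualActive_extend_last (p : Fin n → V) (z : V) :
    ODualActive (extend p z) (Fin.last n) ↔ z ∉ span ℝ (range p) := by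
  constructor
  · rintro ⟨f, -, hfz, hf0⟩ hz
    have span_le_ker : span ℝ (range p) ≤ LinearMap.ker f := by
      rw [span_le, range_subset_iff]
      exact fun i => by simpa using hf0 i.castSucc (Fin.castSucc_lt_last i)
    exact hfz.ne' (by simpa using span_le_ker hz)
  · intro hz
    obtain ⟨f, hf, hfz⟩ := exists_forall_eq_zero_of_notMem_span hz
    refine ⟨f, ?_, by simp [hfz], fun i hi => ?_⟩
    · exact Fin.forall_fin_succ'.2 ⟨fun i => by simp [hf], by simp [hfz]⟩
    · obtain ⟨j, rfl⟩ := Fin.exists_castSucc_eq.2 hi.ne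
      simp [hf]

theorem mk_zero_mem_dependencies_zero :
    ∀ d ∈ dependencies p 0, (d.1, 0) ∈ dependencies p 0 := by
  simp [mem_dependencies]

theorem mk_zero_mem_covectors_zero : ∀ d ∈ covectors p 0, (d.1, 0) ∈ covectors p 0 := by
  rintro _ ⟨f, rfl⟩
  exact ⟨f, by simp⟩

theorem mk_zero_mem_dependencies_of_notMem_span (hz : z ∉ span ℝ (range p)) :
    ∀ d ∈ dependencies p z, (d.1, 0) ∈ dependencies p z := by
  intro d hd
  obtain ⟨f, hf, hfz⟩ := exists_forall_eq_zero_of_notMem_span hz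
  have : d.2 = 0 := by simpa [hf, hfz] using congrArg f (mem_dependencies.1 hd)
  rwa [← this]

theorem mk_zero_mem_covectors_of_notMem_span (hz : z ∉ span ℝ (range p)) :
    ∀ d ∈ covectors p z, (d.1, 0) ∈ covectors p z := by
  rintro _ ⟨f, rfl⟩
  obtain ⟨g, hg, hgz⟩ := exists_forall_eq_zero_of_notMem_span hz
  exact ⟨f - f z • g, Prod.ext (funext fun i => by simp [hg]) (by simp [hgz])⟩

end Extension

section Tutte

variable {n : ℕ} {V : Type*} [AddCommGroup V] [Module ℝ V]

theorem finrank_sup_eq_finrank_map_mkQ_add {K V : Type*} [DivisionRing K] [AddCommGroup V]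
    [Module K V] (U W : Submodule K V) [FiniteDimensional K U] [FiniteDimensional K W] :
    Module.finrank K ↥(U ⊔ W) = Module.finrank K (U.map W.mkQ) + Module.finrank K W := by
  have map_sup_self : (U ⊔ W).map W.mkQ = U.map W.mkQ := by
    rw [Submodule.map_sup, sup_eq_left, map_le_iff_le_comap, comap_map_mkQ]
    exact le_sup_left
  rw [← (W.mkQ.domRestrict (U ⊔ W)).finrank_range_add_finrank_ker, LinearMap.range_domRestrict,
    LinearMap.ker_domRestrict, ker_mkQ, map_sup_self,
    (comapSubtypeEquivOfLe le_sup_right).finrank_eq]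

theorem sum_finset_fin_succ {M : Type*} [AddCommMonoid M] (F : Finset (Fin (n + 1)) → M) :
    ∑ A, F A = ∑ A : Finset (Fin n), (F (A.map Fin.castSuccEmb) +
      F (insert (Fin.last n) (A.map Fin.castSuccEmb))) := by
  have powerset_univ_map : ((Finset.univ : Finset (Fin n)).map Fin.castSuccEmb).powerset =
      Finset.univ.map (Finset.mapEmbedding Fin.castSuccEmb).toEmbedding := by
    ext B
    simp [Finset.subset_map_iff, eq_comm]
  rw [← Finset.powerset_univ, Fin.univ_castSuccEmb, Finset.cons_eq_insert,
    Finset.sum_powerset_insert (by simp), powerset_univ_map, Finset.sum_map, Finset.sum_map,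
    Finset.sum_add_distrib]
  rfl

theorem vrank_le_card (v : Fin n → V) (A : Finset (Fin n)) : vrank v A ≤ A.card := by
  classical
  rw [vrank, ← Finset.coe_image]
  exact (finrank_span_finset_le_card _).trans Finset.card_image_le

theorem vrank_mono (v : Fin n → V) {S T : Set (Fin n)} (hST : S ⊆ T) : vrank v S ≤ vrank v T :=
  have := FiniteDimensional.span_of_finite ℝ (T.toFinite.image v)
  Submodule.finrank_mono (span_mono (image_mono hST))

variable (p : Fin n → V) {z : V}

theorem vrank_extend_map (z : V) (A : Finset (Fin n)) :
    vrank (extend p z) (A.map Fin.castSuccEmb) = vrank p A := by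
  rw [vrank, extend_image_map_castSucc, vrank]

theorem vrank_extend_insert (z : V) (A : Finset (Fin n)) :
    vrank (extend p z) (insert (Fin.last n) (A.map Fin.castSuccEmb) : Finset (Fin (n + 1))) =
      Module.finrank ℝ ↥(span ℝ (p '' A) ⊔ span ℝ {z}) := by
  rw [vrank, Finset.coe_insert, image_insert_eq, extend_last, extend_image_map_castSucc,
    span_insert, sup_comm]

theorem vrank_extend_insert_of_mem_span {A : Finset (Fin n)} (hz : z ∈ span ℝ (p '' A)) :
    vrank (extend p z) (insert (Fin.last n) (A.map Fin.castSuccEmb) : Finset (Fin (n + 1))) =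
      vrank p A := by
  rw [vrank_extend_insert, sup_eq_left.2 ((span_singleton_le_iff_mem _ _).2 hz), vrank]

theorem vrank_extend_insert_of_notMem_span {A : Finset (Fin n)} (hz : z ∉ span ℝ (p '' A)) :
    vrank (extend p z) (insert (Fin.last n) (A.map Fin.castSuccEmb) : Finset (Fin (n + 1))) =
      vrank p A + 1 := by
  have := FiniteDimensional.span_of_finite ℝ (A.finite_toSet.image p)
  have hz0 : z ≠ 0 := by
    rintro rfl
    exact hz (zero_mem _)
  have inf_eq_bot : span ℝ (p '' A) ⊓ span ℝ {z} = ⊥ :=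
    ((disjoint_span_singleton' hz0).2 hz).eq_bot
  rw [vrank_extend_insert, vrank, ← finrank_span_singleton (K := ℝ) hz0,
    ← finrank_sup_add_finrank_inf_eq, inf_eq_bot, finrank_bot, add_zero]

theorem vrank_extend_insert_of_ne_zero (hz : z ≠ 0) (A : Finset (Fin n)) :
    vrank (extend p z) (insert (Fin.last n) (A.map Fin.castSuccEmb) : Finset (Fin (n + 1))) =
      vrank (contract p z) A + 1 := by
  have := FiniteDimensional.span_of_finite ℝ (A.finite_toSet.image p)
  rw [vrank_extend_insert, finrank_sup_eq_finrank_map_mkQ_add, finrank_span_singleton hz,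
    Submodule.map_span, image_image]
  rfl

theorem vrank_univ_eq_vrank_insert_last (v : Fin (n + 1) → V) :
    vrank v univ = vrank v
      (insert (Fin.last n) (Finset.univ.map Fin.castSuccEmb) : Finset (Fin (n + 1))) := by
  rw [← Finset.cons_eq_insert _ _ (by simp), ← Fin.univ_castSuccEmb, Finset.coe_univ]

theorem vrank_extend_univ_of_mem_span (hz : z ∈ span ℝ (range p)) :
    vrank (extend p z) univ = vrank p univ := by
  rw [vrank_univ_eq_vrank_insert_last, vrank_extend_insert_of_mem_span p (by simpa using hz),
    Finset.coe_univ]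

theorem tutteV_extend_zero (x y : ℝ) : tutteV (extend p 0) x y = y * tutteV p x y := by
  rw [tutteV, sum_finset_fin_succ, tutteV, Finset.mul_sum,
    vrank_extend_univ_of_mem_span p (zero_mem _)]
  refine Finset.sum_congr rfl fun A _ => ?_
  rw [vrank_extend_map, vrank_extend_insert_of_mem_span p (zero_mem _),
    Finset.card_insert_of_notMem (by simp), Finset.card_map,
    Nat.sub_add_comm (vrank_le_card p A), pow_succ]
  ring

theorem tutteV_extend_of_notMem_span (hz : z ∉ span ℝ (range p)) (x y : ℝ) :
    tutteV (extend p z) x y = x * tutteV p x y := by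
  have hzA (A : Finset (Fin n)) : z ∉ span ℝ (p '' A) :=
    fun h => hz (span_mono (image_subset_range _ _) h)
  rw [tutteV, sum_finset_fin_succ, tutteV, Finset.mul_sum, vrank_univ_eq_vrank_insert_last,
    vrank_extend_insert_of_notMem_span p (hzA _), Finset.coe_univ]
  refine Finset.sum_congr rfl fun A _ => ?_
  rw [vrank_extend_map, vrank_extend_insert_of_notMem_span p (hzA A),
    Finset.card_insert_of_notMem (by simp), Finset.card_map, Nat.add_sub_add_right,
    Nat.add_sub_add_right, Nat.sub_add_comm (vrank_mono p (subset_univ _)), pow_succ]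
  ring

theorem tutteV_extend_of_mem_span (hz0 : z ≠ 0) (hz : z ∈ span ℝ (range p)) (x y : ℝ) :
    tutteV (extend p z) x y = tutteV p x y + tutteV (contract p z) x y := by
  have vrank_univ_eq_vrank_contract_add_one : vrank p univ = vrank (contract p z) univ + 1 := by
    rw [← vrank_extend_univ_of_mem_span p hz, vrank_univ_eq_vrank_insert_last,
      vrank_extend_insert_of_ne_zero p hz0, Finset.coe_univ]
  simp only [tutteV]
  rw [sum_finset_fin_succ, vrank_extend_univ_of_mem_span p hz, ← Finset.sum_add_distrib]
  refine Finset.sum_congr rfl fun A _ => ?_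
  rw [vrank_extend_map, vrank_extend_insert_of_ne_zero p hz0,
    Finset.card_insert_of_notMem (by simp), Finset.card_map, Nat.add_sub_add_right,
    vrank_univ_eq_vrank_contract_add_one, Nat.add_sub_add_right]

end Tutte

section OrientationSum

open Classical in
/-- The monomial `x ^ #(D \ A) * u ^ #(D ∩ A) * y ^ #(O \ A) * w ^ #(O ∩ A)`, where `D` and `O`
stand for the sets of dually active and of active elements, as a product over the elements. -/
noncomputable def activityWeight {R ι : Type*} [CommMonoid R] [Fintype ι] [DecidableEq ι]
    (x u y w : R) (A : Finset ι) (D O : ι → Prop) : R :=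
  ∏ a, (if D a then if a ∈ A then u else x else 1) * (if O a then if a ∈ A then w else y else 1)

theorem activityWeight_eq_pow {R ι : Type*} [CommMonoid R] [Fintype ι] [DecidableEq ι]
    (x u y w : R) (A : Finset ι) (D O : ι → Prop) :
    activityWeight x u y w A D O =
      x ^ {a | a ∉ A ∧ D a}.ncard * u ^ {a | a ∈ A ∧ D a}.ncard *
        y ^ {a | a ∉ A ∧ O a}.ncard * w ^ {a | a ∈ A ∧ O a}.ncard := by
  classical
  have prod_eq (P : ι → Prop) (r s : R) : ∏ a, (if P a then if a ∈ A then s else r else 1) =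
      r ^ {a | a ∉ A ∧ P a}.ncard * s ^ {a | a ∈ A ∧ P a}.ncard := by
    simp only [ncard_eq_toFinset_card', toFinset_ofPred]
    rw [← Finset.prod_filter, Finset.prod_ite, Finset.prod_const, Finset.prod_const, mul_comm,
      Finset.filter_filter, Finset.filter_filter]
    simp only [and_comm]
  rw [activityWeight, Finset.prod_mul_distrib]
  simp only [prod_eq, mul_assoc]

open Classical in
theorem activityWeight_map_castSucc {R : Type*} [CommMonoid R] {n : ℕ} (x u y w : R)
    (A : Finset (Fin n)) (D O : Fin (n + 1) → Prop) :
    activityWeight x u y w (A.map Fin.castSuccEmb) D O =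
      (if D (Fin.last n) then x else 1) * (if O (Fin.last n) then y else 1) *
        activityWeight x u y w A (fun a => D a.castSucc) (fun a => O a.castSucc) := by
  simp [activityWeight, Fin.prod_univ_castSucc, mul_comm, -mul_ite, -ite_mul]

open Classical in
theorem activityWeight_insert_last {R : Type*} [CommMonoid R] {n : ℕ} (x u y w : R)
    (A : Finset (Fin n)) (D O : Fin (n + 1) → Prop) :
    activityWeight x u y w (insert (Fin.last n) (A.map Fin.castSuccEmb)) D O =
      (if D (Fin.last n) then u else 1) * (if O (Fin.last n) then w else 1) *
        activityWeight x u y w A (fun a => D a.castSucc) (fun a => O a.castSucc) := by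
  simp [activityWeight, Fin.prod_univ_castSucc, mul_comm, -mul_ite, -ite_mul]

variable {n : ℕ} {V : Type*} [AddCommGroup V]

theorem reorient_extend_map (p : Fin n → V) (z : V) (A : Finset (Fin n)) :
    reorient (extend p z) (A.map Fin.castSuccEmb) = extend (reorient p A) z := by
  funext i
  cases i using Fin.lastCases <;> simp [reorient]

theorem reorient_extend_insert (p : Fin n → V) (z : V) (A : Finset (Fin n)) :
    reorient (extend p z) (insert (Fin.last n) (A.map Fin.castSuccEmb)) =
      extend (reorient p A) (-z) := by
  funext i
  cases i using Fin.lastCases <;> simp [reorient]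

theorem span_range_reorient {R : Type*} [Ring R] [Module R V] (v : Fin n → V) (A : Finset (Fin n)) :
    span R (range (reorient v A)) = span R (range v) := by
  refine le_antisymm ?_ ?_ <;> rw [span_le, range_subset_iff] <;> intro i
  · have := subset_span (R := R) (mem_range_self (f := v) i)
    by_cases hi : i ∈ A <;> simpa [reorient, hi] using this
  · have := subset_span (R := R) (mem_range_self (f := reorient v A) i)
    by_cases hi : i ∈ A <;> simpa [reorient, hi] using this

variable [Module ℝ V]

theorem reorient_contract (p : Fin n → V) (z : V) (A : Finset (Fin n)) :
    reorient (contract p z) A = contract (reorient p A) z := by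
  funext i
  simp only [reorient, contract, apply_ite (span ℝ {z}).mkQ, map_neg]

/-- The sum of the activity monomials of all reorientations of `v`. -/
noncomputable def orientationSum (x u y w : ℝ) (v : Fin n → V) : ℝ :=
  ∑ A, activityWeight x u y w A (ODualActive (reorient v A)) (OActive (reorient v A))

variable (x u y w : ℝ) (p : Fin n → V)

open Classical in
theorem orientationSum_extend (z : V) :
    orientationSum x u y w (extend p z) = ∑ A,
      ((if z ∉ span ℝ (range p) then x else 1) * (if z = 0 then y else 1) *
          activityWeight x u y w A (ActiveIn (covectors (reorient p A) z) (Ici 0))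
            (ActiveIn (dependencies (reorient p A) z) (Ici 0)) +
        (if z ∉ span ℝ (range p) then u else 1) * (if z = 0 then w else 1) *
          activityWeight x u y w A (ActiveIn (covectors (reorient p A) z) (Iic 0))
            (ActiveIn (dependencies (reorient p A) z) (Iic 0))) := by
  rw [orientationSum, sum_finset_fin_succ]
  simp only [activityWeight_map_castSucc, activityWeight_insert_last, reorient_extend_map,
    reorient_extend_insert, oActive_extend_last, oDualActive_extend_last, span_range_reorient,
    neg_mem_iff, neg_eq_zero, oActive_extend_neg_castSucc, oDualActive_extend_neg_castSucc]
  simp only [oActive_extend_castSucc, oDualActive_extend_castSucc]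

theorem orientationSum_extend_zero :
    orientationSum x u y w (extend p 0) = (y + w) * orientationSum x u y w p := by
  rw [orientationSum_extend, orientationSum, Finset.mul_sum]
  refine Finset.sum_congr rfl fun A _ => ?_
  rw [oActive_eq_activeIn _ 0, oDualActive_eq_activeIn _ 0]
  simp only [activeIn_eq_of_forall_mem mk_zero_mem_dependencies_zero, self_mem_Ici, self_mem_Iic,
    activeIn_eq_of_forall_mem mk_zero_mem_covectors_zero, mem_univ, zero_mem, not_true, if_true,
    if_false, one_mul, add_mul]

variable {z : V}

theorem orientationSum_extend_of_notMem_span (hz : z ∉ span ℝ (range p)) :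
    orientationSum x u y w (extend p z) = (x + u) * orientationSum x u y w p := by
  have hz0 : z ≠ 0 := by
    rintro rfl
    exact hz (zero_mem _)
  rw [orientationSum_extend, orientationSum, Finset.mul_sum]
  refine Finset.sum_congr rfl fun A _ => ?_
  have hzA : z ∉ span ℝ (range (reorient p A)) := by rwa [span_range_reorient]
  rw [oActive_eq_activeIn _ z, oDualActive_eq_activeIn _ z]
  simp only [activeIn_eq_of_forall_mem (mk_zero_mem_dependencies_of_notMem_span hzA), self_mem_Ici,
    activeIn_eq_of_forall_mem (mk_zero_mem_covectors_of_notMem_span hzA), self_mem_Iic, mem_univ,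
    hz, hz0, not_false_iff, if_true, if_false, mul_one, add_mul]

theorem orientationSum_extend_of_mem_span (hz0 : z ≠ 0) (hz : z ∈ span ℝ (range p)) :
    orientationSum x u y w (extend p z) =
      orientationSum x u y w p + orientationSum x u y w (contract p z) := by
  rw [orientationSum_extend, orientationSum, orientationSum, ← Finset.sum_add_distrib]
  refine Finset.sum_congr rfl fun A _ => ?_
  rw [reorient_contract, oActive_eq_activeIn _ z, oDualActive_eq_activeIn _ z,
    oActive_contract_eq_activeIn, oDualActive_contract_eq_activeIn]
  simp only [hz, hz0, not_true, if_false, one_mul]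
  rcases activeIn_dichotomy (dependencies_orthogonal_covectors (p := reorient p A) (z := z)) with
    ⟨⟨hL, hL'⟩, hM, hM'⟩ | ⟨⟨hL, hL'⟩, hM, hM'⟩
  · rw [hL, hL', hM, hM']
  · rw [hL, hL', hM, hM', add_comm]

theorem tutteV_fin_zero (v : Fin 0 → V) : tutteV v x y = 1 := by
  have vrank_eq_zero (S : Set (Fin 0)) : vrank v S = 0 := by
    rw [vrank, S.eq_empty_of_isEmpty, image_empty, span_empty, finrank_bot]
  simp [tutteV, vrank_eq_zero, Finset.card_eq_zero.2 (Finset.eq_empty_of_isEmpty _)]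

theorem orientationSum_fin_zero (v : Fin 0 → V) : orientationSum x u y w v = 1 := by
  simp [orientationSum, activityWeight]

theorem tutteV_add_eq_orientationSum (v : Fin n → V) :
    tutteV v (x + u) (y + w) = orientationSum x u y w v := by
  induction n generalizing V with
  | zero => rw [tutteV_fin_zero, orientationSum_fin_zero]
  | succ n ih =>
    obtain ⟨p, z, rfl⟩ : ∃ p z, v = extend p z := ⟨_, _, (Fin.snoc_init_self v).symm⟩
    by_cases hz0 : z = 0
    · rw [hz0, tutteV_extend_zero, orientationSum_extend_zero, ih]
    by_cases hz : z ∈ span ℝ (range p)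
    · rw [tutteV_extend_of_mem_span p hz0 hz, orientationSum_extend_of_mem_span x u y w p hz0 hz,
        ih, ih]
    · rw [tutteV_extend_of_notMem_span p hz, orientationSum_extend_of_notMem_span x u y w p hz, ih]

end OrientationSum

theorem statement6_general {n : ℕ} {V : Type*} [AddCommGroup V] [Module ℝ V]
    (v : Fin n → V) (x u y w : ℝ) :
    tutteV v (x + u) (y + w) =
      ∑ A : Finset (Fin n),
        x ^ thetaStar v A * u ^ thetaStarBar v A * y ^ theta v A * w ^ thetaBar v A := by
  simp only [tutteV_add_eq_orientationSum, orientationSum, activityWeight_eq_pow, thetaStar,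
    thetaStarBar, theta, thetaBar]

/-- 4-variable expansion of the Tutte polynomial in orientation activities:
`t(x+u, y+w) = ∑_{A ⊆ Fin n} x^θ*(A) · u^θ̄*(A) · y^θ(A) · w^θ̄(A)`. -/
theorem statement6 {n : ℕ} {V : Type*} [AddCommGroup V] [Module ℝ V] [FiniteDimensional ℝ V]
    (v : Fin n → V) (x u y w : ℝ) :
    tutteV v (x + u) (y + w) =
      ∑ A : Finset (Fin n),
        x ^ thetaStar v A * u ^ thetaStarBar v A * y ^ theta v A * w ^ thetaBar v A := by
  exact statement6_general v x u y w
end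

section
/- (Counting acyclic reorientations, realizable case.) For every vector configuration v : Fin n → V, the evaluation t(2,0) of the Tutte polynomial equals the number of subsets A ⊆ Fin n such that the reorientation v_A is acyclic, i.e. such that there is no nonzero c : Fin n → ℝ with c i ≥ 0 for all i and ∑ i, c i • v_A i = 0 (equivalently, o(A) = 0). -/
open Set Submodule

/-! Acyclic reorientations satisfy the deletion–contraction recursion of `t(2, 0)`. Delete a
nonzero vector `u`, let `w` be a reorientation of the other vectors and let `C` be the cone
spanned by `w`. Adding `u` keeps `w` acyclic iff `-u ∉ C`, adding `-u` keeps it acyclic iff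
`u ∉ C`, and the image of `w` in the contraction `V ⧸ ⟨u⟩` is acyclic iff both hold. As `C` contains
no line when `w` is acyclic, at least one of the two holds, so the number of acyclic extensions of
`w` by `±u` is `[w is acyclic] + [the image of w is acyclic]`. -/

section Acyclic

variable {ι K V W : Type*} [Semiring K] [PartialOrder K] [AddCommMonoid V] [Module K V]
  [AddCommMonoid W] [Module K W]

variable (K) in
/-- The vectors `w i`, `i ∈ s`, form an acyclic configuration: they admit no nontrivial nonnegative
linear dependence. The coefficients range over the nonnegative scalars, which are also the scalars
of a `PointedCone`. -/
def AcyclicOn (s : Finset ι) (w : ι → V) : Prop :=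
  ∀ c : ι → {r : K // 0 ≤ r}, ∑ i ∈ s, c i • w i = 0 → ∀ i ∈ s, c i = 0

variable {s : Finset ι} {w w' : ι → V} {a : ι}

lemma acyclicOn_congr (h : ∀ i ∈ s, w i = w' i) : AcyclicOn K s w ↔ AcyclicOn K s w' := by
  refine forall_congr' fun c => ?_
  rw [Finset.sum_congr rfl fun i hi => congrArg (c i • ·) (h i hi)]

lemma acyclicOn_univ_iff [Fintype ι] :
    AcyclicOn K Finset.univ w ↔
      ¬ ∃ c : ι → K, c ≠ 0 ∧ (∀ i, 0 ≤ c i) ∧ ∑ i, c i • w i = 0 := by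
  constructor
  · rintro h ⟨c, hc, hc_nonneg, hsum⟩
    exact hc (funext fun i =>
      congrArg Subtype.val (h (fun i => ⟨c i, hc_nonneg i⟩) hsum i (Finset.mem_univ i)))
  · intro h c hsum i _
    by_contra hi
    exact h ⟨fun j => c j, fun hc => hi (Subtype.ext (congrFun hc i)), fun j => (c j).2, hsum⟩

variable [IsOrderedRing K]

lemma not_acyclicOn_of_eq_zero [Nontrivial K] (ha : a ∈ s) (hw : w a = 0) : ¬ AcyclicOn K s w := by
  classical
  intro h
  have hsum : ∑ i ∈ s, (Pi.single a 1 : ι → {r : K // 0 ≤ r}) i • w i = 0 := by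
    simp [Pi.single_apply, ha, hw]
  have hone : (1 : {r : K // 0 ≤ r}) = 0 := by simpa only [Pi.single_eq_same] using h _ hsum a ha
  exact one_ne_zero (congrArg Subtype.val hone)

lemma mem_hull_image_finset_iff {x : V} :
    x ∈ PointedCone.hull K (w '' s) ↔ ∃ c : ι → {r : K // 0 ≤ r}, ∑ i ∈ s, c i • w i = x :=
  mem_span_image_finset_iff_exists_fun' _

lemma acyclicOn_comp_iff (f : V →ₗ[K] W) :
    AcyclicOn K s (f ∘ w) ↔
      AcyclicOn K s w ∧
        Disjoint (PointedCone.hull K (w '' s)) (PointedCone.ofSubmodule (LinearMap.ker f)) := by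
  have map_sum_smul (c : ι → {r : K // 0 ≤ r}) :
      ∑ i ∈ s, c i • (f ∘ w) i = f (∑ i ∈ s, c i • w i) := by
    rw [map_sum]
    exact Finset.sum_congr rfl fun i _ => (f.map_smul (c i : K) (w i)).symm
  simp only [AcyclicOn, map_sum_smul, Submodule.disjoint_def, PointedCone.mem_ofSubmodule_iff,
    LinearMap.mem_ker]
  constructor
  · refine fun h => ⟨fun c hc => h c (by rw [hc, map_zero]), fun x hx hfx => ?_⟩
    obtain ⟨c, rfl⟩ := mem_hull_image_finset_iff.1 hx
    exact Finset.sum_eq_zero fun i hi => by rw [h c hfx i hi, zero_smul]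
  · rintro ⟨h, hker⟩ c hc
    exact h c (hker _ (mem_hull_image_finset_iff.2 ⟨c, rfl⟩) hc)

end Acyclic

section Reorientation

variable {ι K V : Type*} [Semiring K] [PartialOrder K] [AddCommGroup V] [Module K V]
  {s : Finset ι} {w : ι → V}

lemma AcyclicOn.salient_hull [IsOrderedRing K] (h : AcyclicOn K s w) :
    (PointedCone.hull K (w '' s) : ConvexCone K V).Salient := by
  intro x hx hx_ne hx_neg
  obtain ⟨c, hc⟩ := mem_hull_image_finset_iff.1 hx
  obtain ⟨d, hd⟩ := mem_hull_image_finset_iff.1 hx_neg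
  have hsum : ∑ i ∈ s, (c + d) i • w i = 0 := by
    simp only [Pi.add_apply, add_smul, Finset.sum_add_distrib, hc, hd, add_neg_cancel]
  have hc_zero : ∀ i ∈ s, c i = 0 := fun i hi => by
    have hadd : (c i : K) + d i = 0 := congrArg Subtype.val (h _ hsum i hi)
    exact Subtype.ext ((add_eq_zero_iff_of_nonneg (c i).2 (d i).2).1 hadd).1
  exact hx_ne (hc ▸ Finset.sum_eq_zero fun i hi => by rw [hc_zero i hi, zero_smul])

variable [DecidableEq ι] {v : ι → V} {a : ι}

variable (K) in
open Classical in
/-- The sets `A ⊆ s` whose elements can be negated to make `v` acyclic on `s`; the reorientation of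
`v` on `A` is encoded as `A.piecewise (-v) v`. -/
noncomputable def acyclicReorientations (s : Finset ι) (v : ι → V) : Finset (Finset ι) :=
  {A ∈ s.powerset | AcyclicOn K s (A.piecewise (-v) v)}

lemma mem_acyclicReorientations {A : Finset ι} :
    A ∈ acyclicReorientations K s v ↔ A ⊆ s ∧ AcyclicOn K s (A.piecewise (-v) v) := by
  simp only [acyclicReorientations, Finset.mem_filter, Finset.mem_powerset]

lemma acyclicReorientations_empty : acyclicReorientations K ∅ v = {∅} := by
  ext A
  simp [mem_acyclicReorientations, AcyclicOn]

lemma acyclicReorientations_of_eq_zero [IsOrderedRing K] [Nontrivial K] (ha : a ∈ s)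
    (hv : v a = 0) :
    acyclicReorientations K s v = ∅ := by
  refine Finset.eq_empty_of_forall_notMem fun A hA => ?_
  refine not_acyclicOn_of_eq_zero ha ?_ (mem_acyclicReorientations.1 hA).2
  by_cases haA : a ∈ A <;> simp [haA, hv]

end Reorientation

section DeletionContraction

variable {ι K V : Type*} [Field K] [LinearOrder K] [IsStrictOrderedRing K]
  [AddCommGroup V] [Module K V] {s : Finset ι} {w : ι → V} {a : ι} {u : V}

lemma acyclicOn_insert [DecidableEq ι] (ha : a ∉ s) :
    AcyclicOn K (insert a s) w ↔ AcyclicOn K s w ∧ -w a ∉ PointedCone.hull K (w '' s) := by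
  have hsum_update (c : ι → {r : K // 0 ≤ r}) (r : {r : K // 0 ≤ r}) :
      ∑ i ∈ insert a s, Function.update c a r i • w i = r • w a + ∑ i ∈ s, c i • w i := by
    rw [Finset.sum_insert ha, Function.update_self]
    congr 1
    exact Finset.sum_congr rfl fun i hi => by
      rw [Function.update_of_ne (ne_of_mem_of_not_mem hi ha)]
  constructor
  · refine fun h => ⟨fun c hc i hi => ?_, fun hmem => ?_⟩
    · have := h (Function.update c a 0) (by rw [hsum_update, hc, zero_smul, zero_add]) i
        (Finset.mem_insert_of_mem hi)
      rwa [Function.update_of_ne (ne_of_mem_of_not_mem hi ha)] at this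
    · obtain ⟨c, hc⟩ := mem_hull_image_finset_iff.1 hmem
      have := h (Function.update c a 1) (by rw [hsum_update, hc, one_smul, add_neg_cancel]) a
        (Finset.mem_insert_self a s)
      exact one_ne_zero (by rwa [Function.update_self] at this)
  · rintro ⟨h, hmem⟩ c hc
    rw [Finset.sum_insert ha] at hc
    have hca : c a = 0 := by
      by_contra hne
      refine hmem (mem_hull_image_finset_iff.2 ⟨fun i => (c a)⁻¹ * c i, ?_⟩)
      simp only [mul_smul, ← Finset.smul_sum]
      rw [eq_neg_of_add_eq_zero_right hc, smul_neg, inv_smul_smul₀ hne]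
    rw [hca, zero_smul, zero_add] at hc
    exact Finset.forall_mem_insert _ _ _ |>.2 ⟨hca, h c hc⟩

lemma acyclicOn_insert_update [DecidableEq ι] (ha : a ∉ s) :
    AcyclicOn K (insert a s) (Function.update w a u) ↔
      AcyclicOn K s w ∧ -u ∉ PointedCone.hull K (w '' s) := by
  have hw : ∀ i ∈ s, Function.update w a u i = w i := fun i hi =>
    Function.update_of_ne (ne_of_mem_of_not_mem hi ha) _ _
  rw [acyclicOn_insert ha, acyclicOn_congr hw, Set.image_congr hw, Function.update_self]

lemma disjoint_ofSubmodule_span_singleton_iff {C : PointedCone K V} (hu : u ≠ 0) :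
    Disjoint C (PointedCone.ofSubmodule (span K {u})) ↔ u ∉ C ∧ -u ∉ C := by
  simp only [Submodule.disjoint_def, PointedCone.mem_ofSubmodule_iff]
  constructor
  · exact fun h => ⟨fun hmem => hu (h u hmem (mem_span_singleton_self u)),
      fun hmem => hu (neg_eq_zero.1 (h (-u) hmem (neg_mem (mem_span_singleton_self u))))⟩
  · rintro ⟨hpos, hneg⟩ x hx hxu
    obtain ⟨r, rfl⟩ := mem_span_singleton.1 hxu
    rcases lt_trichotomy r 0 with hr | rfl | hr
    · refine absurd ?_ hneg
      simpa [hr.ne, smul_smul] using C.smul_mem (neg_nonneg.2 (inv_nonpos.2 hr.le)) hx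
    · exact zero_smul K u
    · refine absurd ?_ hpos
      simpa [hr.ne', smul_smul] using C.smul_mem (inv_nonneg.2 hr.le) hx

lemma acyclicOn_mkQ_comp_iff (hu : u ≠ 0) :
    AcyclicOn K s ((span K {u}).mkQ ∘ w) ↔ AcyclicOn K s w ∧
      u ∉ PointedCone.hull K (w '' s) ∧ -u ∉ PointedCone.hull K (w '' s) := by
  rw [acyclicOn_comp_iff, ker_mkQ, disjoint_ofSubmodule_span_singleton_iff hu]

open Classical in
lemma ite_acyclicOn_update_add_ite_acyclicOn_update_neg [DecidableEq ι] (ha : a ∉ s)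
    (hu : u ≠ 0) :
    (if AcyclicOn K (insert a s) (Function.update w a u) then 1 else 0) +
        (if AcyclicOn K (insert a s) (Function.update w a (-u)) then 1 else 0) =
      (if AcyclicOn K s w then 1 else 0) +
        if AcyclicOn K s ((span K {u}).mkQ ∘ w) then 1 else 0 := by
  rw [acyclicOn_insert_update ha, acyclicOn_insert_update ha, acyclicOn_mkQ_comp_iff hu, neg_neg]
  by_cases h : AcyclicOn K s w
  · have hsalient : u ∈ PointedCone.hull K (w '' s) → -u ∉ PointedCone.hull K (w '' s) :=
      fun hmem => h.salient_hull u hmem hu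
    by_cases hpos : u ∈ PointedCone.hull K (w '' s) <;>
      by_cases hneg : -u ∈ PointedCone.hull K (w '' s) <;> simp_all
  · simp [h]

lemma card_acyclicReorientations_insert [DecidableEq ι] {v : ι → V} (ha : a ∉ s)
    (hv : v a ≠ 0) :
    (acyclicReorientations K (insert a s) v).card =
      (acyclicReorientations K s v).card +
        (acyclicReorientations K s ((span K {v a}).mkQ ∘ v)).card := by
  classical
  simp only [acyclicReorientations, Finset.card_filter]
  rw [Finset.sum_powerset_insert ha, ← Finset.sum_add_distrib, ← Finset.sum_add_distrib]
  refine Finset.sum_congr rfl fun A hA => ?_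
  have haA : a ∉ A := fun h => ha (Finset.mem_powerset.1 hA h)
  have h_update : Function.update (A.piecewise (-v) v) a (v a) = A.piecewise (-v) v :=
    Function.update_eq_self_iff.2 (A.piecewise_eq_of_notMem _ _ haA).symm
  have h_mkQ : (span K {v a}).mkQ ∘ A.piecewise (-v) v =
      A.piecewise (-((span K {v a}).mkQ ∘ v)) ((span K {v a}).mkQ ∘ v) := by
    ext i
    by_cases hi : i ∈ A <;> simp [hi]
  have := ite_acyclicOn_update_add_ite_acyclicOn_update_neg (K := K) (w := A.piecewise (-v) v)
    ha hv
  rwa [h_update, h_mkQ, ← Pi.neg_apply v a, ← Finset.piecewise_insert] at this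

end DeletionContraction

section Rank

variable {ι K V : Type*} [DivisionRing K] [AddCommGroup V] [Module K V]

lemma finrank_map_mkQ_add_finrank {L W : Submodule K V} [FiniteDimensional K W] (h : L ≤ W) :
    Module.finrank K (W.map L.mkQ) + Module.finrank K L = Module.finrank K W := by
  rw [← (L.mkQ.domRestrict W).finrank_range_add_finrank_ker, LinearMap.range_domRestrict,
    LinearMap.ker_domRestrict, ker_mkQ, (comapSubtypeEquivOfLe h).finrank_eq]

lemma finrank_insert_eq_finrank_image_mkQ_add_one {u : V} (hu : u ≠ 0) {T : Set V}
    (hT : T.Finite) :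
    (insert u T).finrank K = ((span K {u}).mkQ '' T).finrank K + 1 := by
  have : FiniteDimensional K (span K (insert u T)) :=
    FiniteDimensional.span_of_finite K (hT.insert u)
  have h_map : (span K (insert u T)).map (span K {u}).mkQ = span K ((span K {u}).mkQ '' T) := by
    rw [map_span, Set.image_insert_eq, mkQ_apply,
      (Quotient.mk_eq_zero _).2 (mem_span_singleton_self u), span_insert_zero]
  have h_le : span K {u} ≤ span K (insert u T) :=
    span_mono (Set.singleton_subset_iff.2 (Set.mem_insert u T))
  rw [Set.finrank, ← finrank_map_mkQ_add_finrank h_le, h_map, finrank_span_singleton hu,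
    Set.finrank]

variable (K) in
/-- The signed count `∑_{A ⊆ s} (-1)^(|A| + r(A))` of the subsets of `s`, which is the value
`t(2, 0)` of the Tutte polynomial of the restriction of `v` to `s`. -/
noncomputable def signedRankSum (s : Finset ι) (v : ι → V) : ℤ :=
  ∑ A ∈ s.powerset, (-1) ^ (A.card + (v '' A).finrank K)

variable (K) in
/-- The value at `(x, y)` of the Tutte polynomial of the matroid realized by the configuration `v`
over `K`. -/
noncomputable def tutteEval [Fintype ι] {R : Type*} [Ring R] (v : ι → V) (x y : R) : R :=
  ∑ A : Finset ι, (x - 1) ^ ((v '' univ).finrank K - (v '' A).finrank K) *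
    (y - 1) ^ (A.card - (v '' A).finrank K)

variable {s : Finset ι} {v : ι → V} {a : ι}

lemma finrank_image_le_card : (v '' s).finrank K ≤ s.card := by
  classical
  rw [← Finset.coe_image]
  exact (finrank_span_finset_le_card _).trans Finset.card_image_le

lemma tutteEval_two_zero [Fintype ι] {R : Type*} [Ring R] :
    tutteEval K v (2 : R) 0 = signedRankSum K Finset.univ v := by
  simp only [tutteEval, signedRankSum, Finset.powerset_univ, Int.cast_sum]
  refine Finset.sum_congr rfl fun A _ => ?_
  have h_parity : Even (A.card - (v '' A).finrank K) ↔ Even (A.card + (v '' A).finrank K) := by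
    rw [Nat.even_sub finrank_image_le_card, Nat.even_add]
  push_cast
  rw [← neg_one_pow_congr h_parity, zero_sub, show (2 : R) - 1 = 1 by norm_num, one_pow, one_mul]

lemma signedRankSum_empty : signedRankSum K ∅ v = 1 := by
  simp [signedRankSum, Set.finrank_empty]

variable [DecidableEq ι]

lemma signedRankSum_insert_of_eq_zero (ha : a ∉ s) (hv : v a = 0) :
    signedRankSum K (insert a s) v = 0 := by
  rw [signedRankSum, Finset.sum_powerset_insert ha, ← Finset.sum_add_distrib]
  refine Finset.sum_eq_zero fun A hA => ?_
  have haA : a ∉ A := fun h => ha (Finset.mem_powerset.1 hA h)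
  have h_rank : (v '' ↑(insert a A)).finrank K = (v '' A).finrank K := by
    rw [Finset.coe_insert, Set.image_insert_eq, hv, Set.finrank, span_insert_zero, Set.finrank]
  rw [Finset.card_insert_of_notMem haA, h_rank]
  ring

lemma signedRankSum_insert (ha : a ∉ s) (hv : v a ≠ 0) :
    signedRankSum K (insert a s) v =
      signedRankSum K s v + signedRankSum K s ((span K {v a}).mkQ ∘ v) := by
  rw [signedRankSum, Finset.sum_powerset_insert ha, signedRankSum, signedRankSum]
  congr 1
  refine Finset.sum_congr rfl fun A hA => ?_
  have haA : a ∉ A := fun h => ha (Finset.mem_powerset.1 hA h)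
  have h_rank : (v '' ↑(insert a A)).finrank K =
      (((span K {v a}).mkQ ∘ v) '' A).finrank K + 1 := by
    rw [Finset.coe_insert, Set.image_insert_eq, Set.image_comp,
      finrank_insert_eq_finrank_image_mkQ_add_one hv (A.finite_toSet.image v)]
  rw [Finset.card_insert_of_notMem haA, h_rank]
  ring

end Rank

section Count

variable {ι K V : Type*} [DecidableEq ι] [Field K] [LinearOrder K] [IsStrictOrderedRing K]
  [AddCommGroup V] [Module K V]

theorem signedRankSum_eq_card_acyclicReorientations (s : Finset ι) (v : ι → V) :
    signedRankSum K s v = (acyclicReorientations K s v).card := by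
  induction s using Finset.induction_on generalizing V with
  | empty => simp [signedRankSum_empty, acyclicReorientations_empty]
  | insert a s ha ih =>
    by_cases hv : v a = 0
    · rw [signedRankSum_insert_of_eq_zero ha hv,
        acyclicReorientations_of_eq_zero (Finset.mem_insert_self a s) hv, Finset.card_empty,
        Nat.cast_zero]
    · rw [signedRankSum_insert ha hv, card_acyclicReorientations_insert ha hv, ih, ih, Nat.cast_add]

theorem statement9_general [Fintype ι] {R : Type*} [Ring R] (v : ι → V) :
    tutteEval K v (2 : R) 0 =
      ({A : Finset ι | ¬ ∃ c : ι → K, c ≠ 0 ∧ (∀ i, 0 ≤ c i) ∧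
        ∑ i, c i • A.piecewise (-v) v i = 0}.ncard : R) := by
  have h_set : {A : Finset ι | ¬ ∃ c : ι → K, c ≠ 0 ∧ (∀ i, 0 ≤ c i) ∧
      ∑ i, c i • A.piecewise (-v) v i = 0} = ↑(acyclicReorientations K Finset.univ v) := by
    ext A
    simp [mem_acyclicReorientations, acyclicOn_univ_iff]
  rw [tutteEval_two_zero, signedRankSum_eq_card_acyclicReorientations, h_set,
    Set.ncard_coe_finset, Int.cast_natCast]

end Count

/-- `t(2,0)` counts the subsets `A ⊆ Fin n` whose reorientation `v_A` is acyclic,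
i.e. admits no nonzero nonnegative linear dependence. -/
theorem statement9 {n : ℕ} {V : Type*} [AddCommGroup V] [Module ℝ V] [FiniteDimensional ℝ V]
    (v : Fin n → V) :
    tutteV v 2 0 =
      ({A : Finset (Fin n) |
        ¬ ∃ c : Fin n → ℝ, c ≠ 0 ∧ (∀ i, 0 ≤ c i) ∧ (∑ i, c i • reorient v A i) = 0}.ncard : ℝ) :=
  statement9_general v
end
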